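/- Let r,q ≥ 1 with rq > 1. Then there is exactly one meander position m* ∈ {1,…,N} with Morse number i_{m*} = r+q, and for every other position m ≠ m* there exists a directed path from m* to m in the connection digraph of σ_{rq}. (This is the combinatorial content of the statement that the Sturm attractor A_{rq} is the closure of the unstable manifold of a single equilibrium, i.e., a Sturm ball of dimension r+q.) -/

import Mathlib

/-- Morse numbers `i_j` of a permutation `σ` of `{1,…,N}` (extended to `ℕ`),
via the recursion `i_1 = 0`,
`i_{j+1} = i_j + (-1)^(j+1) * sign (σ⁻¹(j+1) - σ⁻¹(j))`. -/
def morse (σ : Equiv.Perm ℕ) : ℕ → ℤ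
  | 0 => 0
  | 1 => 0
  | (j+2) => morse σ (j+1) +
      (-1)^(j+2) * Int.sign ((σ.symm (j+2) : ℤ) - (σ.symm (j+1) : ℤ))

/-- Zero numbers `z_{j k}`, recursion in the first index `j`, second index `k` fixed:
`z_{1k} = 0`, `z_{kk} = i_k`, `z_{k+1,k} = min (i_k, i_{k+1})`, and otherwise
`z_{j+1,k} = z_{jk} + ((-1)^(j+1)/2) * (sign (σ⁻¹(j+1) - σ⁻¹(k)) - sign (σ⁻¹(j) - σ⁻¹(k)))`. -/
def zrec (σ : Equiv.Perm ℕ) (k : ℕ) : ℕ → ℤ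
  | 0 => 0
  | 1 => 0
  | (j+2) =>
      if j+2 = k then morse σ k
      else if j+1 = k then min (morse σ k) (morse σ (k+1))
      else zrec σ k (j+1) +
        ((-1)^(j+2) * (Int.sign ((σ.symm (j+2) : ℤ) - (σ.symm k : ℤ))
          - Int.sign ((σ.symm (j+1) : ℤ) - (σ.symm k : ℤ)))) / 2

/-- The zero number `z_{m n}`. -/
def zfun (σ : Equiv.Perm ℕ) (m n : ℕ) : ℤ := zrec σ n m

/-- The connection digraph of a dissipative Morse permutation `σ` of `{1,…,N}`:
an edge `m ⤳ n` iff `i_m = i_n + 1` and no `w` strictly between `m` and `n`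
blocks, i.e. satisfies `z_{mw} = z_{wn} = z_{mn}`. -/
def hasEdge (N : ℕ) (σ : Equiv.Perm ℕ) (m n : ℕ) : Prop :=
  1 ≤ m ∧ m ≤ N ∧ 1 ≤ n ∧ n ≤ N ∧
  morse σ m = morse σ n + 1 ∧
  ¬ ∃ w : ℕ, min m n < w ∧ w < max m n ∧
      zfun σ m w = zfun σ w n ∧ zfun σ w n = zfun σ m n

/-- A dissipative permutation of `{1,…,N}`. -/
def Dissipative (N : ℕ) (σ : Equiv.Perm ℕ) : Prop :=
  Set.BijOn σ (Set.Icc 1 N) (Set.Icc 1 N) ∧ σ 1 = 1 ∧ σ N = N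

/-- The Morse property: all Morse numbers are nonnegative. -/
def MorseProp (N : ℕ) (σ : Equiv.Perm ℕ) : Prop :=
  ∀ j, 1 ≤ j → j ≤ N → 0 ≤ morse σ j

/-- Morse counts `μ(i) = #{j ∈ {1,…,N} : i_j = i}`. -/
def morseCount (N : ℕ) (σ : Equiv.Perm ℕ) (i : ℤ) : ℕ :=
  ((Finset.Icc 1 N).filter (fun j => morse σ j = i)).card

/-- The primitive 3-nose permutation `σ_{rq}` of `{1,…,N}`, `N = 2(r+1)(q+1)-1`,
characterized by its defining relations, extended to a permutation of `ℕ`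
fixing everything outside `{1,…,N}`. -/
def SigmaRQ (r q : ℕ) (σ : Equiv.Perm ℕ) : Prop :=
  (∀ a, a ∉ Set.Icc 1 (2*(r+1)*(q+1) - 1) → σ a = a) ∧
  (∀ j k, j ≤ r → k ≤ q →
    σ (2*((q+1)*j+k)+1) = 2*(j+(r+1)*k)+1) ∧
  (∀ j k, j ≤ r → k ≤ q → ¬(j = 0 ∧ k = 0) →
    σ (2*((q+1)*(r-j)+(q-k)+1)) = 2*(j+(r+1)*k))

/-- Tags `A`, `B` of equilibrium labels `A^j_k`, `B^j_k`. -/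
inductive Tag | A | B
deriving DecidableEq

/-- The axis position (`h_1`-position) of the label `L^j_k` for parameters `(r,q)`. -/
def axisPos (r q : ℕ) : Tag → ℕ → ℕ → ℕ
  | Tag.A, j, k => if Odd j then (q+1)*(j-1)+k+1 else (q+1)*(2*r+1-j)+(q-k)+1
  | Tag.B, j, k => if Odd j then (q+1)*j+(q-k)+1 else (q+1)*(2*r-j)+k+1

/-- The meander position (`h_0`-position) of the label `L^j_k` for parameters `(r,q)`. -/
def meanderPos (r q : ℕ) : Tag → ℕ → ℕ → ℕ
  | Tag.A, j, k => if Odd k then (r+1)*(2*q+1-k)+(2*r+1-j) else (r+1)*k+j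
  | Tag.B, j, k => if Odd k then (r+1)*(2*q+1-k)+j else (r+1)*(k+1)+(r-j)

/-- The suspension `σ̃` of a dissipative permutation `σ` of `{1,…,N}`:
`σ̃(1) = 1`, `σ̃(N+2) = N+2`, and `σ̃(a+1) = N+2 - σ(a)` for `1 ≤ a ≤ N`. -/
def IsSuspension (N : ℕ) (σ σt : Equiv.Perm ℕ) : Prop :=
  σt 1 = 1 ∧ σt (N+2) = N+2 ∧ ∀ a, 1 ≤ a → a ≤ N → σt (a+1) = N+2 - σ a

/-- The label `A^0_0` is the distinguished (formal) vertex `⋆`. -/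
def IsStar (L : Tag) (j k : ℕ) : Prop := L = Tag.A ∧ j = 0 ∧ k = 0

/-- Tag swap `A ↔ B`, used by the reversor. -/
def tagSwap : Tag → Tag
  | Tag.A => Tag.B
  | Tag.B => Tag.A

/-!
Label the positions by `A^j_k`, `B^j_k` (`j ≤ r`, `k ≤ q`, without `A^0_0`); the Morse numbers are
`j + k - 1` on `A^j_k` and `j + k` on `B^j_k`. On the meander, the labels of fixed `k` form one run
`A^0_k, …, A^r_k, B^r_k, …, B^0_k` (or its reverse), so meander neighbours lead from `B^r_k` down to
every label of lower index `k`. On the axis, the `B^j_k` of fixed `j` are consecutive, so axis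
neighbours lead from `B^r_q` down to each `B^r_k`. Neighbours on the axis are never blocked, because
the parity of `z_{mn}` records whether meander and axis order `m` and `n` alike. Finally, edges lower
the Morse number, so reachability of all other positions makes `B^r_q` the only one of Morse number
`r + q`.
-/

section ConnectionDigraph

variable {σ : Equiv.Perm ℕ} {N m n : ℕ}

theorem sign_natCast_sub {a b : ℕ} (hab : a ≠ b) :
    Int.sign ((a : ℤ) - b) = if a < b then -1 else 1 := by
  split_ifs with h
  · exact Int.sign_eq_neg_one_of_neg (by omega)
  · exact Int.sign_eq_one_of_pos (by omega)

theorem morse_succ (σ : Equiv.Perm ℕ) {p : ℕ} (hp : p ≠ 0) :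
    morse σ (p + 1) = morse σ p + if Even p ↔ σ.symm (p + 1) < σ.symm p then 1 else -1 := by
  have hrec : morse σ (p + 1) =
      morse σ p + (-1) ^ (p + 1) * Int.sign ((σ.symm (p + 1) : ℤ) - σ.symm p) := by
    cases p with
    | zero => contradiction
    | succ p => rfl
  rw [hrec, sign_natCast_sub (σ.symm.injective.ne p.succ_ne_self), pow_succ]
  rcases Nat.even_or_odd p with hpar | hpar
  · simp only [hpar.neg_one_pow, hpar, true_iff]
    split_ifs <;> rfl
  · simp only [hpar.neg_one_pow, Nat.not_even_iff_odd.mpr hpar, false_iff]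
    split_ifs <;> rfl

theorem even_morse_iff_odd (σ : Equiv.Perm ℕ) {p : ℕ} (hp : 1 ≤ p) :
    Even (morse σ p) ↔ Odd p := by
  induction p, hp using Nat.le_induction with
  | base => simp [morse]
  | succ p hp ih =>
    rw [morse_succ σ (Nat.one_le_iff_ne_zero.mp hp)]
    split_ifs <;> simp only [Int.even_iff, Nat.odd_iff] at ih ⊢ <;> omega

theorem zfun_succ_self (σ : Equiv.Perm ℕ) (k : ℕ) :
    zfun σ (k + 1) k = min (morse σ k) (morse σ (k + 1)) := by
  cases k <;> simp [zfun, zrec, morse]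

theorem even_zfun_succ_iff (σ : Equiv.Perm ℕ) {j k : ℕ} (hj : j ≠ 0) (hjk : j ≠ k)
    (hjk' : j + 1 ≠ k) :
    Even (zfun σ (j + 1) k) ↔
      (Even (zfun σ j k) ↔ (σ.symm (j + 1) < σ.symm k ↔ σ.symm j < σ.symm k)) := by
  have hrec : zfun σ (j + 1) k = zfun σ j k +
      ((-1) ^ (j + 1) * (Int.sign ((σ.symm (j + 1) : ℤ) - σ.symm k) -
        Int.sign ((σ.symm j : ℤ) - σ.symm k))) / 2 := by
    cases j with
    | zero => contradiction
    | succ j => rw [zfun, zrec, if_neg hjk', if_neg hjk, zfun]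
  rw [hrec, sign_natCast_sub (σ.symm.injective.ne hjk), sign_natCast_sub (σ.symm.injective.ne hjk'),
    Int.even_add]
  rcases neg_one_pow_eq_or ℤ (j + 1) with hpow | hpow <;> rw [hpow] <;>
    split_ifs with h h' h' <;> simp [h, h']

theorem even_zfun_iff {j k : ℕ} (hk : 1 < k ↔ σ.symm 1 < σ.symm k) (hj : 1 ≤ j) (hjk : j ≠ k) :
    Even (zfun σ j k) ↔ (j < k ↔ σ.symm j < σ.symm k) := by
  induction j, hj using Nat.le_induction with
  | base => simp [zfun, zrec, hk]
  | succ j hj ih =>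
    have hj0 : j ≠ 0 := Nat.one_le_iff_ne_zero.mp hj
    rcases eq_or_ne j k with rfl | hjk'
    · have hpar := even_morse_iff_odd σ hj
      rw [zfun_succ_self, morse_succ σ hj0]
      simp only [Int.even_iff, Nat.odd_iff, Nat.even_iff] at hpar ⊢
      split_ifs <;> omega
    · have hlt : j + 1 < k ↔ j < k := by omega
      rw [even_zfun_succ_iff σ hj0 hjk' hjk, ih hjk', hlt]
      tauto

theorem hasEdge_of_meander_adjacent (hm : m ∈ Set.Icc 1 N) (hn : n ∈ Set.Icc 1 N)
    (hmorse : morse σ m = morse σ n + 1) (hadj : m = n + 1 ∨ n = m + 1) : hasEdge N σ m n := by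
  refine ⟨hm.1, hm.2, hn.1, hn.2, hmorse, ?_⟩
  rintro ⟨w, hw, hw', -⟩
  omega

/-- A blocking `w` lies between `m` and `n` on the meander but on the same side of both on the axis,
so `z_{mw}` and `z_{wn}` have different parities. -/
theorem hasEdge_of_axis_adjacent (hσ : ∀ w, 1 < w → σ.symm 1 < σ.symm w) (hm : m ∈ Set.Icc 1 N)
    (hn : n ∈ Set.Icc 1 N) (hmorse : morse σ m = morse σ n + 1)
    (hadj : σ.symm m = σ.symm n + 1 ∨ σ.symm n = σ.symm m + 1) : hasEdge N σ m n := by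
  refine ⟨hm.1, hm.2, hn.1, hn.2, hmorse, ?_⟩
  rintro ⟨w, hw, hw', hz, -⟩
  have hfirst : ∀ {k}, 1 ≤ k → (1 < k ↔ σ.symm 1 < σ.symm k) := fun {k} hk =>
    ⟨hσ k, fun h => hk.lt_of_ne fun h1 => h.ne (h1 ▸ rfl)⟩
  obtain ⟨hm1, -⟩ := hm
  obtain ⟨hn1, -⟩ := hn
  have hmw : m ≠ w := by omega
  have hwn : w ≠ n := by omega
  have hmw_axis : σ.symm m ≠ σ.symm w := σ.symm.injective.ne hmw
  have hwn_axis : σ.symm w ≠ σ.symm n := σ.symm.injective.ne hwn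
  have hparity : (m < w ↔ σ.symm m < σ.symm w) ↔ (w < n ↔ σ.symm w < σ.symm n) := by
    rw [← even_zfun_iff (hfirst (by omega)) hm1 hmw, hz, even_zfun_iff (hfirst hn1) (by omega) hwn]
  omega

theorem morse_lt_of_transGen (h : Relation.TransGen (hasEdge N σ) m n) :
    morse σ n < morse σ m := by
  induction h with
  | single hedge => linarith [hedge.2.2.2.2.1]
  | tail _ hedge ih => linarith [hedge.2.2.2.2.1]

end ConnectionDigraph

section MeanderLabels

variable {r q m j K i : ℕ}

theorem mul_add_lt_mul_succ_iff {s t : ℕ} (hs : s < 2 * (q + 1)) :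
    (q + 1) * t + s < (q + 1) * (r + 1) ↔ t < r ∨ t = r ∧ s ≤ q := by
  rcases lt_trichotomy t r with h | rfl | h
  · have : (q + 1) * (t + 1) ≤ (q + 1) * r := Nat.mul_le_mul_left _ h
    simp only [mul_add_one] at this ⊢
    omega
  · rw [mul_add_one (q + 1) t]
    omega
  · have : (q + 1) * (r + 1) ≤ (q + 1) * t := Nat.mul_le_mul_left _ h
    omega

/-- Row `K` consists of the positions `(r + 1) * (2 * K) + t` with `t ≤ 2 * r + 1`. It carries the
labels of lower index `2 * K` if `2 * K ≤ q`, and of lower index `2 * (q - K) + 1` otherwise. -/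
theorem row_mem_Icc {t : ℕ} (hK : K ≤ q) (ht : t ≤ 2 * r + 1) (hKt : ¬ (t = 0 ∧ K = 0)) :
    (r + 1) * (2 * K) + t ∈ Set.Icc 1 (2 * (r + 1) * (q + 1) - 1) := by
  have hle : (r + 1) * K ≤ (r + 1) * q := Nat.mul_le_mul_left _ hK
  have hKle : K ≤ (r + 1) * K := Nat.le_mul_of_pos_left K r.succ_pos
  have hpos : (r + 1) * (2 * K) = 2 * ((r + 1) * K) := by ring
  have hN : 2 * (r + 1) * (q + 1) = 2 * ((r + 1) * q) + 2 * (r + 1) := by ring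
  exact ⟨by omega, by omega⟩

theorem exists_row_of_mem_Icc (hm : m ∈ Set.Icc 1 (2 * (r + 1) * (q + 1) - 1)) :
    ∃ K t, K ≤ q ∧ t ≤ 2 * r + 1 ∧ ¬ (t = 0 ∧ K = 0) ∧ m = (r + 1) * (2 * K) + t := by
  obtain ⟨hm1, hmN⟩ := hm
  have hdiv : (r + 1) * (2 * (m / (2 * (r + 1)))) + m % (2 * (r + 1)) = m := by
    conv_rhs => rw [← Nat.div_add_mod m (2 * (r + 1))]
    ring
  have hmod : m % (2 * (r + 1)) < 2 * (r + 1) := Nat.mod_lt _ (by omega)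
  have hK : m / (2 * (r + 1)) < q + 1 := Nat.div_lt_of_lt_mul (by omega)
  refine ⟨_, _, by omega, by omega, ?_, hdiv.symm⟩
  rintro ⟨ht, hK0⟩
  simp only [ht, hK0] at hdiv
  omega

theorem meanderPos_A_two_mul : meanderPos r q .A j (2 * K) = (r + 1) * (2 * K) + j := by
  simp [meanderPos]

theorem meanderPos_B_two_mul (hj : j ≤ r) :
    meanderPos r q .B j (2 * K) = (r + 1) * (2 * K) + (2 * r + 1 - j) := by
  have hodd : ¬ Odd (2 * K) := by simp
  rw [meanderPos, if_neg hodd, mul_add_one]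
  omega

theorem meanderPos_A_two_mul_add_one :
    meanderPos r q .A j (2 * i + 1) = (r + 1) * (2 * (q - i)) + (2 * r + 1 - j) := by
  rw [meanderPos, if_pos (odd_two_mul_add_one i), Nat.add_sub_add_right, ← Nat.mul_sub]

theorem meanderPos_B_two_mul_add_one :
    meanderPos r q .B j (2 * i + 1) = (r + 1) * (2 * (q - i)) + j := by
  rw [meanderPos, if_pos (odd_two_mul_add_one i), Nat.add_sub_add_right, ← Nat.mul_sub]

theorem not_isStar_B {k : ℕ} : ¬ IsStar .B j k := fun h => nomatch h.1

theorem meanderPos_mem_Icc {L : Tag} {k : ℕ} (hj : j ≤ r) (hk : k ≤ q) (hstar : ¬ IsStar L j k) :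
    meanderPos r q L j k ∈ Set.Icc 1 (2 * (r + 1) * (q + 1) - 1) := by
  obtain ⟨i, rfl | rfl⟩ := Nat.even_or_odd' k <;> cases L
  · rw [meanderPos_A_two_mul]
    exact row_mem_Icc (by omega) (by omega) fun h => hstar ⟨rfl, h.1, by omega⟩
  · rw [meanderPos_B_two_mul hj]
    exact row_mem_Icc (by omega) (by omega) (by omega)
  · rw [meanderPos_A_two_mul_add_one]
    exact row_mem_Icc (by omega) (by omega) (by omega)
  · rw [meanderPos_B_two_mul_add_one]
    exact row_mem_Icc (by omega) (by omega) (by omega)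

theorem exists_meanderPos_eq (hm : m ∈ Set.Icc 1 (2 * (r + 1) * (q + 1) - 1)) :
    ∃ L j k, j ≤ r ∧ k ≤ q ∧ ¬ IsStar L j k ∧ meanderPos r q L j k = m := by
  obtain ⟨K, t, hK, ht, hKt, rfl⟩ := exists_row_of_mem_Icc hm
  have hfold : 2 * r + 1 - (2 * r + 1 - t) = t := by omega
  by_cases hKq : 2 * K ≤ q <;> by_cases htr : t ≤ r
  · exact ⟨.A, t, 2 * K, htr, hKq, fun h => hKt ⟨h.2.1, by have := h.2.2; omega⟩,
      meanderPos_A_two_mul⟩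
  · exact ⟨.B, 2 * r + 1 - t, 2 * K, by omega, hKq, not_isStar_B,
      by rw [meanderPos_B_two_mul (by omega), hfold]⟩
  · exact ⟨.B, t, 2 * (q - K) + 1, htr, by omega, not_isStar_B,
      by rw [meanderPos_B_two_mul_add_one, Nat.sub_sub_self hK]⟩
  · exact ⟨.A, 2 * r + 1 - t, 2 * (q - K) + 1, by omega, by omega, fun h => by simpa using h.2.2,
      by rw [meanderPos_A_two_mul_add_one, Nat.sub_sub_self hK, hfold]⟩

theorem meanderPos_A_succ_adjacent {k : ℕ} (hj : j < r) :
    meanderPos r q .A (j + 1) k = meanderPos r q .A j k + 1 ∨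
      meanderPos r q .A j k = meanderPos r q .A (j + 1) k + 1 := by
  simp only [meanderPos]
  split_ifs <;> omega

theorem meanderPos_B_succ_adjacent {k : ℕ} (hj : j < r) :
    meanderPos r q .B (j + 1) k = meanderPos r q .B j k + 1 ∨
      meanderPos r q .B j k = meanderPos r q .B (j + 1) k + 1 := by
  simp only [meanderPos]
  split_ifs <;> omega

theorem meanderPos_B_A_adjacent {k : ℕ} :
    meanderPos r q .B r k = meanderPos r q .A r k + 1 ∨
      meanderPos r q .A r k = meanderPos r q .B r k + 1 := by
  simp only [meanderPos, mul_add_one]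
  split_ifs <;> omega

theorem axisPos_B_succ_adjacent {k : ℕ} (hk : k < q) :
    axisPos r q .B j (k + 1) = axisPos r q .B j k + 1 ∨
      axisPos r q .B j k = axisPos r q .B j (k + 1) + 1 := by
  simp only [axisPos]
  split_ifs <;> omega

end MeanderLabels

namespace SigmaRQ

variable {r q j k K t : ℕ} {σ : Equiv.Perm ℕ}

theorem symm_odd (hσ : SigmaRQ r q σ) (hj : j ≤ r) (hK : K ≤ q) :
    σ.symm ((r + 1) * (2 * K) + (2 * j + 1)) = (q + 1) * (2 * j) + 2 * K + 1 := by
  have h := hσ.2.1 j K hj hK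
  rw [Equiv.symm_apply_eq]
  ring_nf at h ⊢
  exact h.symm

/-- The subtraction-free form of `σ⁻¹(2x) = N + 1 - 2τ`, where `σ⁻¹(2x + 1) = 2τ + 1`. -/
theorem symm_even_add (hσ : SigmaRQ r q σ) (hj : j ≤ r) (hK : K ≤ q) (hjK : ¬ (j = 0 ∧ K = 0)) :
    σ.symm ((r + 1) * (2 * K) + 2 * j) + ((q + 1) * (2 * j) + 2 * K) =
      2 * ((q + 1) * (r + 1)) := by
  have h : σ.symm (2 * (j + (r + 1) * K)) = 2 * ((q + 1) * (r - j) + (q - K) + 1) := by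
    rw [← hσ.2.2 j K hj hK hjK, Equiv.symm_apply_apply]
  rw [show (r + 1) * (2 * K) + 2 * j = 2 * (j + (r + 1) * K) by ring, h]
  zify [hj, hK]
  ring

theorem symm_one_lt (hσ : SigmaRQ r q σ) {w : ℕ} (hw : 1 < w) : σ.symm 1 < σ.symm w := by
  have h0 : σ.symm 0 = 0 := by rw [Equiv.symm_apply_eq, hσ.1 0 (by simp)]
  have h1 : σ.symm 1 = 1 := by simpa using hσ.symm_odd (Nat.zero_le r) (Nat.zero_le q)
  have hw0 : σ.symm w ≠ σ.symm 0 := σ.symm.injective.ne (by omega)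
  have hw1 : σ.symm w ≠ σ.symm 1 := σ.symm.injective.ne (by omega)
  omega

theorem symm_meanderPos_B (hσ : SigmaRQ r q σ) (hj : j ≤ r) (hk : k ≤ q) :
    σ.symm (meanderPos r q .B j k) = axisPos r q .B j k := by
  have hcomplement (i : ℕ) (hi : i ≤ r) :
      (q + 1) * (2 * (r - i)) + (q + 1) * (2 * i) + 2 * (q + 1) = 2 * ((q + 1) * (r + 1)) := by
    zify [hi]
    ring
  obtain ⟨K, rfl | rfl⟩ := Nat.even_or_odd' k <;> obtain ⟨i, rfl | rfl⟩ := Nat.even_or_odd' j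
  · have hodd := hσ.symm_odd (Nat.sub_le r i) (show K ≤ q by omega)
    have hoffset : 2 * r + 1 - 2 * i = 2 * (r - i) + 1 := by omega
    have hnot : ¬ Odd (2 * i) := by simp
    rw [meanderPos_B_two_mul hj, hoffset, hodd, axisPos, if_neg hnot, Nat.mul_sub 2]
  · have heven := hσ.symm_even_add (Nat.sub_le r i) (show K ≤ q by omega) (by omega)
    have hoffset : 2 * r + 1 - (2 * i + 1) = 2 * (r - i) := by omega
    rw [meanderPos_B_two_mul hj, hoffset, axisPos, if_pos (odd_two_mul_add_one i), mul_add_one]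
    have := hcomplement i (by omega)
    omega
  · have heven := hσ.symm_even_add (show i ≤ r by omega) (Nat.sub_le q K) (by omega)
    have hnot : ¬ Odd (2 * i) := by simp
    rw [meanderPos_B_two_mul_add_one, axisPos, if_neg hnot, ← Nat.mul_sub 2]
    have := hcomplement i (by omega)
    omega
  · have hodd := hσ.symm_odd (show i ≤ r by omega) (Nat.sub_le q K)
    rw [meanderPos_B_two_mul_add_one, hodd, axisPos, if_pos (odd_two_mul_add_one i), mul_add_one]
    omega

theorem morse_row_succ (hσ : SigmaRQ r q σ) (hK : K ≤ q) (ht : t ≤ 2 * r)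
    (hKt : ¬ (t = 0 ∧ K = 0)) :
    morse σ ((r + 1) * (2 * K) + t + 1) = morse σ ((r + 1) * (2 * K) + t) +
      if t < r ∨ t = r ∧ 2 * K ≤ q then 1 else -1 := by
  rw [morse_succ σ (Nat.one_le_iff_ne_zero.mp (row_mem_Icc hK (by omega) hKt).1),
    add_right_inj]
  refine if_congr ?_ rfl rfl
  rw [← mul_add_lt_mul_succ_iff (show 2 * K < 2 * (q + 1) by omega)]
  obtain ⟨j, rfl | rfl⟩ := Nat.even_or_odd' t
  · have hodd := hσ.symm_odd (show j ≤ r by omega) hK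
    have heven := hσ.symm_even_add (show j ≤ r by omega) hK (by omega)
    have hpar : Even ((r + 1) * (2 * K) + 2 * j) := by simp [Nat.even_add]
    rw [add_assoc, hodd, iff_true_left hpar]
    omega
  · have hodd := hσ.symm_odd (show j ≤ r by omega) hK
    have heven := hσ.symm_even_add (show j + 1 ≤ r by omega) hK (by omega)
    have hpar : ¬ Even ((r + 1) * (2 * K) + (2 * j + 1)) := by simp [Nat.even_add, parity_simps]
    have hnext : (r + 1) * (2 * K) + (2 * j + 1) + 1 = (r + 1) * (2 * K) + 2 * (j + 1) := by ring
    have hmul : (q + 1) * (2 * (j + 1)) = (q + 1) * (2 * j) + 2 * (q + 1) := by ring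
    rw [hnext, hodd, iff_false_left hpar, mul_add_one (q + 1) (2 * j)]
    omega

theorem morse_row_start (hσ : SigmaRQ r q σ) (hK : K + 1 ≤ q) :
    morse σ ((r + 1) * (2 * (K + 1))) = morse σ ((r + 1) * (2 * K) + (2 * r + 1)) +
      if 2 * K + 1 ≤ q then 1 else -1 := by
  have hodd := hσ.symm_odd le_rfl (show K ≤ q by omega)
  have heven := hσ.symm_even_add (Nat.zero_le r) hK (by omega)
  have hnext : (r + 1) * (2 * (K + 1)) = (r + 1) * (2 * K) + (2 * r + 1) + 1 := by ring
  have hmul : 2 * ((q + 1) * (r + 1)) = (q + 1) * (2 * r) + 2 * (q + 1) := by ring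
  have hpar : ¬ Even ((r + 1) * (2 * K) + (2 * r + 1)) := by simp [Nat.even_add, parity_simps]
  rw [mul_zero, add_zero, hnext, mul_zero, zero_add] at heven
  rw [hnext, morse_succ σ (by omega), add_right_inj]
  refine if_congr ?_ rfl rfl
  rw [hodd, iff_false_left hpar]
  omega

theorem morse_row (hσ : SigmaRQ r q σ) (hK : K ≤ q) (ht : t ≤ 2 * r + 1)
    (hKt : ¬ (t = 0 ∧ K = 0)) :
    morse σ ((r + 1) * (2 * K) + t) =
      if 2 * K ≤ q then 2 * (K : ℤ) - 1 + min (t : ℤ) (2 * r + 2 - t)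
      else 2 * (q : ℤ) + 1 - 2 * K + min (t : ℤ) (2 * r - t) := by
  induction K generalizing t with
  | zero =>
    induction t with
    | zero => contradiction
    | succ t iht =>
      rcases Nat.eq_zero_or_pos t with rfl | htpos
      · simp only [mul_zero, zero_add, morse]
        split_ifs <;> omega
      · rw [← add_assoc, hσ.morse_row_succ hK (by omega) (by omega), iht (by omega) (by omega)]
        split_ifs <;> omega
  | succ K ihK =>
    induction t with
    | zero =>
      rw [add_zero, hσ.morse_row_start hK, ihK (by omega) le_rfl (by omega)]
      split_ifs <;> omega
    | succ t iht =>
      rw [← add_assoc, hσ.morse_row_succ hK (by omega) (by omega), iht (by omega) (by omega)]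
      split_ifs <;> omega

theorem morse_meanderPos_A (hσ : SigmaRQ r q σ) (hj : j ≤ r) (hk : k ≤ q)
    (hstar : ¬ IsStar .A j k) : morse σ (meanderPos r q .A j k) = j + k - 1 := by
  obtain ⟨K, rfl | rfl⟩ := Nat.even_or_odd' k
  · have hjK : ¬ (j = 0 ∧ K = 0) := fun h => hstar ⟨rfl, h.1, by omega⟩
    rw [meanderPos_A_two_mul, hσ.morse_row (by omega) (by omega) hjK, if_pos hk]
    omega
  · rw [meanderPos_A_two_mul_add_one, hσ.morse_row (by omega) (by omega) (by omega),
      if_neg (by omega)]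
    omega

theorem morse_meanderPos_B (hσ : SigmaRQ r q σ) (hj : j ≤ r) (hk : k ≤ q) :
    morse σ (meanderPos r q .B j k) = j + k := by
  obtain ⟨K, rfl | rfl⟩ := Nat.even_or_odd' k
  · rw [meanderPos_B_two_mul hj, hσ.morse_row (by omega) (by omega) (by omega), if_pos hk]
    omega
  · rw [meanderPos_B_two_mul_add_one, hσ.morse_row (by omega) (by omega) (by omega),
      if_neg (by omega)]
    omega

theorem hasEdge_B_succ_lower (hσ : SigmaRQ r q σ) (hj : j ≤ r) (hk : k < q) :
    hasEdge (2 * (r + 1) * (q + 1) - 1) σ (meanderPos r q .B j (k + 1))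
      (meanderPos r q .B j k) := by
  refine hasEdge_of_axis_adjacent (fun _ => hσ.symm_one_lt)
    (meanderPos_mem_Icc hj hk not_isStar_B)
    (meanderPos_mem_Icc hj hk.le not_isStar_B) ?_ ?_
  · rw [hσ.morse_meanderPos_B hj hk, hσ.morse_meanderPos_B hj hk.le]
    push_cast
    ring
  · rw [hσ.symm_meanderPos_B hj hk, hσ.symm_meanderPos_B hj hk.le]
    exact axisPos_B_succ_adjacent hk

theorem hasEdge_B_succ_upper (hσ : SigmaRQ r q σ) (hj : j < r) (hk : k ≤ q) :
    hasEdge (2 * (r + 1) * (q + 1) - 1) σ (meanderPos r q .B (j + 1) k)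
      (meanderPos r q .B j k) := by
  refine hasEdge_of_meander_adjacent
    (meanderPos_mem_Icc hj hk not_isStar_B)
    (meanderPos_mem_Icc hj.le hk not_isStar_B) ?_ (meanderPos_B_succ_adjacent hj)
  rw [hσ.morse_meanderPos_B hj hk, hσ.morse_meanderPos_B hj.le hk]
  push_cast
  ring

theorem hasEdge_A_succ_upper (hσ : SigmaRQ r q σ) (hj : j < r) (hk : k ≤ q)
    (hstar : ¬ IsStar .A j k) :
    hasEdge (2 * (r + 1) * (q + 1) - 1) σ (meanderPos r q .A (j + 1) k)
      (meanderPos r q .A j k) := by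
  have hstar' : ¬ IsStar .A (j + 1) k := fun h => nomatch h.2.1
  refine hasEdge_of_meander_adjacent (meanderPos_mem_Icc hj hk hstar')
    (meanderPos_mem_Icc hj.le hk hstar) ?_ (meanderPos_A_succ_adjacent hj)
  rw [hσ.morse_meanderPos_A hj hk hstar', hσ.morse_meanderPos_A hj.le hk hstar]
  push_cast
  ring

theorem hasEdge_B_A (hσ : SigmaRQ r q σ) (hk : k ≤ q) (hstar : ¬ IsStar .A r k) :
    hasEdge (2 * (r + 1) * (q + 1) - 1) σ (meanderPos r q .B r k) (meanderPos r q .A r k) := by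
  refine hasEdge_of_meander_adjacent (meanderPos_mem_Icc le_rfl hk not_isStar_B)
    (meanderPos_mem_Icc le_rfl hk hstar) ?_ meanderPos_B_A_adjacent
  rw [hσ.morse_meanderPos_B le_rfl hk, hσ.morse_meanderPos_A le_rfl hk hstar]
  ring

theorem reflTransGen_B_lower (hσ : SigmaRQ r q σ) (hj : j ≤ r) (hk : k ≤ q) :
    Relation.ReflTransGen (hasEdge (2 * (r + 1) * (q + 1) - 1) σ) (meanderPos r q .B j q)
      (meanderPos r q .B j k) :=
  (reflTransGen_of_succ_of_ge (fun a b => hasEdge _ σ (meanderPos r q .B j a)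
    (meanderPos r q .B j b)) (fun _ h => hσ.hasEdge_B_succ_lower hj h.2) hk).lift _ fun _ _ => id

theorem reflTransGen_B_upper (hσ : SigmaRQ r q σ) (hj : j ≤ r) (hk : k ≤ q) :
    Relation.ReflTransGen (hasEdge (2 * (r + 1) * (q + 1) - 1) σ) (meanderPos r q .B r k)
      (meanderPos r q .B j k) :=
  (reflTransGen_of_succ_of_ge (fun a b => hasEdge _ σ (meanderPos r q .B a k)
    (meanderPos r q .B b k)) (fun _ h => hσ.hasEdge_B_succ_upper h.2 hk) hj).lift
      (meanderPos r q .B · k) fun _ _ => id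

theorem reflTransGen_A_upper (hσ : SigmaRQ r q σ) (hj : j ≤ r) (hk : k ≤ q)
    (hstar : ¬ IsStar .A j k) :
    Relation.ReflTransGen (hasEdge (2 * (r + 1) * (q + 1) - 1) σ) (meanderPos r q .A r k)
      (meanderPos r q .A j k) := by
  refine (reflTransGen_of_succ_of_ge (fun a b => hasEdge _ σ (meanderPos r q .A a k)
    (meanderPos r q .A b k)) (fun a h => hσ.hasEdge_A_succ_upper h.2 hk ?_) hj).lift
      (meanderPos r q .A · k) fun _ _ => id
  exact fun hs => hstar ⟨rfl, Nat.le_zero.mp (hs.2.1 ▸ h.1), hs.2.2⟩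

theorem reflTransGen_meanderPos (hσ : SigmaRQ r q σ) {L : Tag} (hj : j ≤ r) (hk : k ≤ q)
    (hstar : ¬ IsStar L j k) :
    Relation.ReflTransGen (hasEdge (2 * (r + 1) * (q + 1) - 1) σ) (meanderPos r q .B r q)
      (meanderPos r q L j k) := by
  refine (hσ.reflTransGen_B_lower le_rfl hk).trans ?_
  cases L with
  | A =>
    have hstar' : ¬ IsStar .A r k := fun h => hstar ⟨rfl, Nat.le_zero.mp (h.2.1 ▸ hj), h.2.2⟩
    exact (hσ.reflTransGen_A_upper hj hk hstar).head (hσ.hasEdge_B_A hk hstar')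
  | B => exact hσ.reflTransGen_B_upper hj hk

end SigmaRQ

/-- there is exactly one meander position of maximal Morse number
`r+q`, and every other position is reachable from it by a directed path in the
connection digraph (`A_{rq}` is a Sturm ball of dimension `r+q`). -/
theorem stmt_11 (r q : ℕ) (hr : 1 ≤ r) (hq : 1 ≤ q) (hrq : 1 < r*q)
    (σ : Equiv.Perm ℕ) (hσ : SigmaRQ r q σ) :
    ∃ mstar : ℕ, 1 ≤ mstar ∧ mstar ≤ 2*(r+1)*(q+1)-1 ∧
      morse σ mstar = (r : ℤ) + (q : ℤ) ∧
      (∀ m, 1 ≤ m → m ≤ 2*(r+1)*(q+1)-1 →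
        morse σ m = (r : ℤ) + (q : ℤ) → m = mstar) ∧
      (∀ m, 1 ≤ m → m ≤ 2*(r+1)*(q+1)-1 → m ≠ mstar →
        Relation.ReflTransGen (hasEdge (2*(r+1)*(q+1)-1) σ) mstar m) := by
  have hreach (m : ℕ) (hm : m ∈ Set.Icc 1 (2*(r+1)*(q+1)-1)) :
      Relation.ReflTransGen (hasEdge (2*(r+1)*(q+1)-1) σ) (meanderPos r q .B r q) m := by
    obtain ⟨L, j, k, hj, hk, hstar, rfl⟩ := exists_meanderPos_eq hm
    exact hσ.reflTransGen_meanderPos hj hk hstar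
  have hmax := hσ.morse_meanderPos_B (le_refl r) (le_refl q)
  have hmem : meanderPos r q .B r q ∈ Set.Icc 1 (2*(r+1)*(q+1)-1) :=
    meanderPos_mem_Icc le_rfl le_rfl not_isStar_B
  refine ⟨meanderPos r q .B r q, hmem.1, hmem.2, hmax, fun m h1 hN hm => ?_,
    fun m h1 hN _ => hreach m ⟨h1, hN⟩⟩
  rcases Relation.reflTransGen_iff_eq_or_transGen.mp (hreach m ⟨h1, hN⟩) with heq | hpath
  · exact heq
  · exact absurd (hm.trans hmax.symm) (morse_lt_of_transGen hpath).ne
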